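/- Let K be a field, Ω a set, and λ : Ω* → K a function satisfying λ(uv) = λ(u) + λ(v) for all words u, v, and λ(w) ≠ 0 for every nonempty word w. Let M and A be moulds on Ω such that M^∅ = 1, A is alternal, and λ(w) · M^w = (A × M)^w for every word w. Then M is symétral. -/

import Mathlib

namespace Moulds

variable {X : Type*} {K : Type*}

/-- The multiset of shuffles (interleavings) of two words, counted with multiplicity. -/
def shuffles : List X → List X → Multiset (List X)
  | [], v => {v}
  | a :: u, [] => {a :: u}
  | a :: u, b :: v =>
      (shuffles u (b :: v)).map (a :: ·) + (shuffles (a :: u) v).map (b :: ·)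
termination_by u v => u.length + v.length

/-- The multiset of contracting shuffles of two words: interleavings in which any
pair of adjacent letters coming one from each word may be contracted to their sum. -/
def cshuffles [Add X] : List X → List X → Multiset (List X)
  | [], v => {v}
  | a :: u, [] => {a :: u}
  | a :: u, b :: v =>
      (cshuffles u (b :: v)).map (a :: ·) + (cshuffles (a :: u) v).map (b :: ·)
        + (cshuffles u v).map ((a + b) :: ·)
termination_by u v => u.length + v.length

/-- Shuffle sum Σ_{w ∈ sh(u,v)} M^w (with multiplicity). -/
def shuffleSum [AddCommMonoid K] (M : List X → K) (u v : List X) : K :=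
  ((shuffles u v).map M).sum

/-- Contracting shuffle sum Σ_{w ∈ csh(u,v)} M^w (with multiplicity). -/
def cshuffleSum [Add X] [AddCommMonoid K] (M : List X → K) (u v : List X) : K :=
  ((cshuffles u v).map M).sum

/-- A mould is alternal if it vanishes on ∅ and all its nontrivial shuffle sums vanish. -/
def Alternal [AddCommMonoid K] (M : List X → K) : Prop :=
  M [] = 0 ∧ ∀ u v : List X, u ≠ [] → v ≠ [] → shuffleSum M u v = 0

/-- A mould is symétral if M^∅ = 1 and shuffle sums multiply. -/
def Symetral [CommRing K] (M : List X → K) : Prop :=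
  M [] = 1 ∧ ∀ u v : List X, shuffleSum M u v = M u * M v

/-- A mould is alternel if it vanishes on ∅ and all its nontrivial contracting
shuffle sums vanish. -/
def Alternel [Add X] [AddCommMonoid K] (M : List X → K) : Prop :=
  M [] = 0 ∧ ∀ u v : List X, u ≠ [] → v ≠ [] → cshuffleSum M u v = 0

/-- A mould is symétrel if M^∅ = 1 and contracting shuffle sums multiply. -/
def Symetrel [Add X] [CommRing K] (M : List X → K) : Prop :=
  M [] = 1 ∧ ∀ u v : List X, cshuffleSum M u v = M u * M v

/-- Mould multiplication: (M × N)^w = Σ_{w = w¹w²} M^{w¹} N^{w²}. -/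
def mmul [CommRing K] (M N : List X → K) : List X → K :=
  fun w => ∑ i ∈ Finset.range (w.length + 1), M (w.take i) * N (w.drop i)

/-- The unit mould 1^•, equal to 1 on the empty word and 0 elsewhere. -/
def mone [One K] [Zero K] : List X → K :=
  fun w => match w with | [] => 1 | _ => 0

/-- The mould I^•, equal to 1 on one-letter words and 0 elsewhere. -/
def mId [One K] [Zero K] : List X → K :=
  fun w => if w.length = 1 then 1 else 0

/-- All factorizations of a word into nonempty consecutive blocks; a block is
recorded as (first letter, rest of the block). -/
def splits : List X → List (List (X × List X))
  | [] => [[]]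
  | a :: t =>
      (splits t).flatMap fun p =>
        match p with
        | [] => [[(a, ([] : List X))]]
        | (b, r) :: ps => [(a, b :: r) :: ps, (a, ([] : List X)) :: (b, r) :: ps]

/-- The sum ‖·‖ of the letters of a (nonempty) block. -/
def blockSum [Add X] (b : X × List X) : X := b.2.foldl (· + ·) b.1

/-- Mould composition:
(M ∘ N)^w = Σ_{w = w¹⋯wˢ, wⁱ ≠ ∅} M^{(‖w¹‖,…,‖wˢ‖)} N^{w¹} ⋯ N^{wˢ}. -/
def mcomp [Add X] [CommRing K] (M N : List X → K) : List X → K :=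
  fun w => ((splits w).map
    (fun p => M (p.map blockSum) * (p.map (fun b => N (b.1 :: b.2))).prod)).sum

/-- The monomial series associated to a word. -/
def mono [DecidableEq X] [One K] [Zero K] (w : List X) : List X → K :=
  fun w' => if w' = w then 1 else 0

end Moulds

namespace Moulds

/- STATEMENT 16: Over a field K, suppose λ : Ω* → K satisfies λ(uv) = λ(u) + λ(v)
and λ(w) ≠ 0 for nonempty w.  If M^∅ = 1, A is alternal and
λ(w)·M^w = (A × M)^w for all words w, then M is symétral. -/

variable {Ω : Type*} {K : Type*} [Field K]

/-!
Call a function of two words a *dimould*; dimoulds multiply by cutting both words. The shuffle sums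
of a mould `M` form a dimould `τ M`, and `τ` is multiplicative. Moreover `A` is alternal when
`τ A = A ⊗ 1 + 1 ⊗ A`, while `M` is symétral when `τ M = M ⊗ M`. Since every shuffle of `u` and `v`
has weight `λ(u) + λ(v)`, applying `τ` to `λ M = A × M` yields
`(λ(u) + λ(v)) P = (A ⊗ 1 + 1 ⊗ A) × P` for `P = τ M`. The dimould `P = M ⊗ M` solves the same
equation by the Leibniz rule, and the equation determines `P` from `P^{∅,∅}` by induction on length.
-/

section Shuffles

variable {X R : Type*}

lemma perm_append_of_mem_shuffles {u v w : List X} (hw : w ∈ shuffles u v) : w.Perm (u ++ v) := by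
  induction u, v using shuffles.induct generalizing w with
  | case1 v => simp_all [shuffles]
  | case2 a u => simp_all [shuffles]
  | case3 a u b v ihu ihv =>
    simp only [shuffles, Multiset.mem_add, Multiset.mem_map] at hw
    rcases hw with ⟨w, hw, rfl⟩ | ⟨w, hw, rfl⟩
    · exact (ihu hw).cons a
    · exact ((ihv hw).cons b).trans List.perm_middle.symm

lemma additive_eq_of_perm [AddCommSemigroup R] {lam : List X → R}
    (hadd : ∀ u v, lam (u ++ v) = lam u + lam v) {w w' : List X} (h : w.Perm w') :
    lam w = lam w' := by
  have lam_cons (a : X) (w : List X) : lam (a :: w) = lam [a] + lam w := hadd [a] w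
  induction h with
  | nil => rfl
  | cons a _ ih => rw [lam_cons, ih, ← lam_cons]
  | swap a b w => simp only [lam_cons _ (_ :: w), lam_cons _ w, add_left_comm]
  | trans _ _ ih₁ ih₂ => exact ih₁.trans ih₂

lemma additive_eq_of_mem_shuffles [AddCommSemigroup R] {lam : List X → R}
    (hadd : ∀ u v, lam (u ++ v) = lam u + lam v) {u v w : List X} (hw : w ∈ shuffles u v) :
    lam w = lam u + lam v :=
  (additive_eq_of_perm hadd (perm_append_of_mem_shuffles hw)).trans (hadd u v)

section AddCommMonoid

variable [AddCommMonoid R]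

lemma shuffleSum_nil_left (M : List X → R) (v : List X) : shuffleSum M [] v = M v := by
  simp [shuffleSum, shuffles]

lemma shuffleSum_nil_right (M : List X → R) (u : List X) : shuffleSum M u [] = M u := by
  cases u <;> simp [shuffleSum, shuffles]

lemma shuffleSum_cons_cons (M : List X → R) (a b : X) (u v : List X) :
    shuffleSum M (a :: u) (b :: v) =
      shuffleSum (fun w ↦ M (a :: w)) u (b :: v) + shuffleSum (fun w ↦ M (b :: w)) (a :: u) v := by
  simp [shuffleSum, shuffles]

lemma shuffleSum_add (M N : List X → R) (u v : List X) :
    shuffleSum (fun w ↦ M w + N w) u v = shuffleSum M u v + shuffleSum N u v :=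
  Multiset.sum_map_add

end AddCommMonoid

section Semiring

variable [NonUnitalNonAssocSemiring R]

lemma shuffleSum_const_mul (c : R) (M : List X → R) (u v : List X) :
    shuffleSum (fun w ↦ c * M w) u v = c * shuffleSum M u v :=
  Multiset.sum_map_mul_left

lemma shuffleSum_additive_mul {lam : List X → R} (hadd : ∀ u v, lam (u ++ v) = lam u + lam v)
    (M : List X → R) (u v : List X) :
    shuffleSum (fun w ↦ lam w * M w) u v = (lam u + lam v) * shuffleSum M u v := by
  rw [← shuffleSum_const_mul]
  refine congrArg Multiset.sum (Multiset.map_congr rfl fun w hw ↦ ?_)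
  rw [additive_eq_of_mem_shuffles hadd hw]

end Semiring

end Shuffles

section Dimoulds

variable {X R : Type*}

/-- Multiplication of dimoulds, i.e. of functions of two words, given by deconcatenating both
words: `(P × Q)^{u,v} = Σ P^{u¹,v¹} Q^{u²,v²}` over all `u = u¹u²` and `v = v¹v²`. -/
def dmul [NonUnitalNonAssocSemiring R] (P Q : List X → List X → R) (u v : List X) : R :=
  ∑ i ∈ Finset.range (u.length + 1), ∑ j ∈ Finset.range (v.length + 1),
    P (u.take i) (v.take j) * Q (u.drop i) (v.drop j)

/-- The decomposable dimould `M ⊗ N`, with `(M ⊗ N)^{u,v} = M^u N^v`. -/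
def tensor [Mul R] (M N : List X → R) (u v : List X) : R :=
  M u * N v

-- `C^{∅,∅} = 0` kills the only term of `C × P` in which `P` is evaluated at `(u, v)` itself.
lemma eq_of_mul_eq_dmul [NonUnitalNonAssocSemiring R] {C ell P Q : List X → List X → R}
    (hC : C [] [] = 0) (hell : ∀ u v, u ++ v ≠ [] → IsLeftRegular (ell u v))
    (h_nil : P [] [] = Q [] []) (hP : ∀ u v, ell u v * P u v = dmul C P u v)
    (hQ : ∀ u v, ell u v * Q u v = dmul C Q u v) : P = Q := by
  ext u v
  induction hn : u.length + v.length using Nat.strong_induction_on generalizing u v with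
  | _ n ih =>
    by_cases huv : u ++ v = []
    · obtain ⟨rfl, rfl⟩ := List.append_eq_nil_iff.mp huv
      exact h_nil
    · refine hell u v huv ?_
      change ell u v * P u v = ell u v * Q u v
      rw [hP, hQ]
      refine Finset.sum_congr rfl fun i hi ↦ Finset.sum_congr rfl fun j hj ↦ ?_
      rw [Finset.mem_range] at hi hj
      by_cases hij : i = 0 ∧ j = 0
      · simp [hij, hC]
      · rw [ih _ _ (u.drop i) (v.drop j) rfl]
        simp only [List.length_drop]
        omega

variable [CommRing R]

lemma mmul_cons (M N : List X → R) (a : X) (w : List X) :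
    mmul M N (a :: w) = mmul (fun w ↦ M (a :: w)) N w + M [] * N (a :: w) := by
  simp [mmul, Finset.sum_range_succ' _ (w.length + 1)]

lemma mone_mmul (M : List X → R) : mmul mone M = M := by
  ext w
  cases w <;> simp [mmul, mone, Finset.sum_range_succ']

lemma dmul_nil_left (P Q : List X → List X → R) (v : List X) :
    dmul P Q [] v = mmul (P []) (Q []) v := by
  simp [dmul, mmul]

lemma dmul_nil_right (P Q : List X → List X → R) (u : List X) :
    dmul P Q u [] = mmul (P · []) (Q · []) u := by
  simp [dmul, mmul]

lemma add_dmul (P P' Q : List X → List X → R) (u v : List X) :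
    dmul (P + P') Q u v = dmul P Q u v + dmul P' Q u v := by
  simp [dmul, add_mul, Finset.sum_add_distrib]

lemma dmul_tensor (A B M N : List X → R) :
    dmul (tensor A B) (tensor M N) = tensor (mmul A M) (mmul B N) := by
  ext u v
  simp only [dmul, tensor, mmul, Finset.sum_mul_sum, mul_mul_mul_comm]

lemma dmul_shuffleSum_cons_cons (M : List X → R) (Q : List X → List X → R) (a b : X)
    (u v : List X) :
    dmul (shuffleSum M) Q (a :: u) (b :: v) =
      dmul (shuffleSum fun w ↦ M (a :: w)) Q u (b :: v)
        + dmul (shuffleSum fun w ↦ M (b :: w)) Q (a :: u) v + M [] * Q (a :: u) (b :: v) := by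
  simp only [dmul, List.length_cons, Finset.sum_range_succ' _ (u.length + 1),
    Finset.sum_range_succ' _ (v.length + 1), List.take_succ_cons, List.drop_succ_cons,
    List.take_zero, List.drop_zero, shuffleSum_cons_cons M, shuffleSum_nil_left,
    shuffleSum_nil_right, add_mul, Finset.sum_add_distrib]
  ring

lemma shuffleSum_mmul (M N : List X → R) :
    shuffleSum (mmul M N) = dmul (shuffleSum M) (shuffleSum N) := by
  ext u v
  induction u, v using shuffles.induct generalizing M with
  | case1 v => simp only [dmul_nil_left, shuffleSum_nil_left, funext (shuffleSum_nil_left _)]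
  | case2 a u => simp only [dmul_nil_right, shuffleSum_nil_right]
  | case3 a u b v ihu ihv =>
    rw [dmul_shuffleSum_cons_cons, ← ihu, ← ihv, shuffleSum_cons_cons N, shuffleSum_cons_cons]
    simp only [mmul_cons, shuffleSum_add, shuffleSum_const_mul]
    ring

lemma Alternal.shuffleSum_eq {A : List X → R} (hA : Alternal A) :
    shuffleSum A = tensor A mone + tensor mone A := by
  ext u v
  rcases u with _ | ⟨a, u⟩
  · cases v <;> simp [shuffleSum_nil_left, tensor, mone, hA.1]
  rcases v with _ | ⟨b, v⟩
  · simp [shuffleSum_nil_right, tensor, mone]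
  · simp [hA.2, tensor, mone]

lemma Alternal.dmul_shuffleSum_tensor {A : List X → R} (hA : Alternal A) (M N : List X → R)
    (u v : List X) :
    dmul (shuffleSum A) (tensor M N) u v = mmul A M u * N v + M u * mmul A N v := by
  rw [hA.shuffleSum_eq, add_dmul, dmul_tensor, dmul_tensor, mone_mmul, mone_mmul, tensor, tensor]

end Dimoulds

theorem symetral_of_mould_differential_equation_general {X R : Type*} [CommRing R]
    (lam : List X → R)
    (hadd : ∀ u v : List X, lam (u ++ v) = lam u + lam v)
    (hreg : ∀ w : List X, w ≠ [] → IsLeftRegular (lam w))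
    (M A : List X → R)
    (hM0 : M [] = 1)
    (hA : Alternal A)
    (heq : ∀ w : List X, lam w * M w = mmul A M w) :
    Symetral M := by
  have h_shuffle (u v : List X) :
      (lam u + lam v) * shuffleSum M u v = dmul (shuffleSum A) (shuffleSum M) u v := by
    rw [← shuffleSum_additive_mul hadd, funext heq, shuffleSum_mmul]
  have h_tensor (u v : List X) :
      (lam u + lam v) * tensor M M u v = dmul (shuffleSum A) (tensor M M) u v := by
    rw [hA.dmul_shuffleSum_tensor, ← heq, ← heq, tensor]
    ring
  have h_eq : shuffleSum M = tensor M M :=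
    eq_of_mul_eq_dmul (by rw [shuffleSum_nil_left, hA.1])
      (fun u v huv ↦ hadd u v ▸ hreg (u ++ v) huv)
      (by simp [shuffleSum_nil_left, tensor, hM0]) h_shuffle h_tensor
  exact ⟨hM0, fun u v ↦ congrFun₂ h_eq u v⟩

theorem symetral_of_mould_differential_equation
    (lam : List Ω → K)
    (hadd : ∀ u v : List Ω, lam (u ++ v) = lam u + lam v)
    (hne : ∀ w : List Ω, w ≠ [] → lam w ≠ 0)
    (M A : List Ω → K)
    (hM0 : M [] = 1)
    (hA : Alternal A)
    (heq : ∀ w : List Ω, lam w * M w = mmul A M w) :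
    Symetral M :=
  symetral_of_mould_differential_equation_general lam hadd
    (fun w hw ↦ (IsRegular.of_ne_zero (hne w hw)).left) M A hM0 hA heq

end Moulds
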